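/- Let ν ≥ 0 and 0 ≤ ν' ≤ ν be integers and ξ ∈ S². Then Σ_{λ=−ν'}^{ν'} C(ν+λ, ν−ν') · C(ν−λ, ν−ν') · |Y_{ν'}^λ(ξ)|² ≤ C(ν, ν')² · (2ν'+1)/(4π). -/

import Mathlib

/-!
The weights satisfy `C(ν+λ, k) C(ν-λ, k) ≤ C(ν, k)²` with `k = ν - ν'`, because `j ↦ C(j, k)` is
log-concave (`choose_mul_le_int`), and `C(ν, k) = C(ν, ν')`. Bounding each term this way reduces
the claim to the diagonal addition theorem `∑ₘ |Yₙᵐ(ξ)|² = (2n+1)/(4π)` (`sum_norm_sphHarm_sq`).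

The addition theorem is derived from Rodrigues' formula. The orders `±m` contribute equally and
`(1 - x²)^(m/2)` occurs squared, so the statement becomes the polynomial identity
`P² + 2 ∑_{m=1}^n (n-m)!/(n+m)! (1-x²)^m (P⁽ᵐ⁾)² = 1`, where `P` is the Legendre polynomial of
degree `n`. The derivative of the left side telescopes to `0` by the associated Legendre equations
(`derivative_legSum`), and its value at `x = 1` is `P(1)² = 1` (`legSum_eval`).
-/


open MeasureTheory Metric Filter Asymptotics Real

noncomputable section

namespace Paper

/-- `E3` is three-dimensional Euclidean space `ℝ³`. -/
abbrev E3 : Type := EuclideanSpace ℝ (Fin 3)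

/-- The Legendre polynomial of degree `n`, via Rodrigues' formula. -/
def legendreP (n : ℕ) (x : ℝ) : ℝ :=
  (1 / ((2 : ℝ) ^ n * n.factorial)) * iteratedDeriv n (fun t : ℝ => (t ^ 2 - 1) ^ n) x

/-- The associated Legendre function `P_n^m` for natural-number order `m`. -/
def assocLegendreNat (n m : ℕ) (x : ℝ) : ℝ :=
  (-1 : ℝ) ^ m * (1 - x ^ 2) ^ ((m : ℝ) / 2) * iteratedDeriv m (legendreP n) x

/-- The associated Legendre function `P_n^m` for integer order `m`. -/
def assocLegendre (n : ℕ) (m : ℤ) (x : ℝ) : ℝ :=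
  if 0 ≤ m then assocLegendreNat n m.toNat x
  else
    (-1 : ℝ) ^ (-m).toNat *
      (((n - (-m).toNat).factorial : ℝ) / ((n + (-m).toNat).factorial : ℝ)) *
      assocLegendreNat n (-m).toNat x

/-- The normalization constant `A_n^m = √((2n+1)/(4π) · (n−m)!/(n+m)!)`. -/
def normA (n : ℕ) (m : ℤ) : ℝ :=
  Real.sqrt ((2 * n + 1) / (4 * π) *
    ((((n : ℤ) - m).toNat.factorial : ℝ) / (((n : ℤ) + m).toNat.factorial : ℝ)))

/-- The spherical harmonic `Y_n^m`, viewed as a function of a unit vector `ξ ∈ S²`: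
`Y_n^m(ξ) = A_n^m e^{imφ} P_n^m(cos θ)`, where `cos θ = ξ₃` and `φ` is the azimuthal
angle of `ξ`. -/
def sphHarm (n : ℕ) (m : ℤ) (ξ : E3) : ℂ :=
  ((normA n m : ℝ) : ℂ) *
    Complex.exp ((m : ℂ) * ((Complex.arg ((ξ 0 : ℂ) + (ξ 1 : ℂ) * Complex.I) : ℝ) : ℂ) *
      Complex.I) *
    ((assocLegendre n m (ξ 2) : ℝ) : ℂ)

/-- The regular solid harmonic `R_n^m(x) = ‖x‖^n Y_n^m(x/‖x‖)` (with `R_n^m(0) = 0` for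
`n > 0` and `R_0^0 ≡ 1/√(4π)`; these values are produced automatically at `x = 0`). -/
def solidR (n : ℕ) (m : ℤ) (x : E3) : ℂ :=
  ((‖x‖ ^ n : ℝ) : ℂ) * sphHarm n m (‖x‖⁻¹ • x)

/-- The irregular solid harmonic `I_n^m(x) = ‖x‖^{-(n+1)} Y_n^m(x/‖x‖)` (for `x ≠ 0`). -/
def solidI (n : ℕ) (m : ℤ) (x : E3) : ℂ :=
  (((‖x‖ ^ (n + 1))⁻¹ : ℝ) : ℂ) * sphHarm n m (‖x‖⁻¹ • x)

/-- The unit sphere `S² ⊂ ℝ³`. -/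
def S2 : Set E3 := Metric.sphere (0 : E3) 1

/-- Surface integral over the unit sphere (with respect to two-dimensional Hausdorff
measure, which is the surface measure `dS`). -/
def sphereIntegral (g : E3 → ℂ) : ℂ := ∫ ξ in S2, g ξ ∂μH[2]

/-- The local coefficient `L_n^m = ρ^{-n} ∫_{S²} f(c + ρξ) conj(Y_n^m(ξ)) dS(ξ)`. -/
def localCoeff (c : E3) (ρ : ℝ) (f : E3 → ℂ) (n : ℕ) (m : ℤ) : ℂ :=
  (((ρ ^ n)⁻¹ : ℝ) : ℂ) *
    sphereIntegral (fun ξ => f (c + ρ • ξ) * (starRingEnd ℂ) (sphHarm n m ξ))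

/-- The `p`-th order local expansion `L_c^p[f](x) = Σ_{n=0}^p Σ_{m=-n}^n L_n^m R_n^m(x-c)`
of `f` centered at `c`, with coefficients computed on the sphere of radius `ρ` about `c`. -/
def localExp (c : E3) (ρ : ℝ) (f : E3 → ℂ) (p : ℕ) (x : E3) : ℂ :=
  ∑ n ∈ Finset.range (p + 1), ∑ m ∈ Finset.Icc (-(n : ℤ)) (n : ℤ),
    localCoeff c ρ f n m * solidR n m (x - c)

/-- The multipole coefficient `M_n^m = ρ^{n+1} ∫_{S²} g(c + ρξ) conj(Y_n^m(ξ)) dS(ξ)`. -/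
def mpoleCoeff (c : E3) (ρ : ℝ) (g : E3 → ℂ) (n : ℕ) (m : ℤ) : ℂ :=
  ((ρ ^ (n + 1) : ℝ) : ℂ) *
    sphereIntegral (fun ξ => g (c + ρ • ξ) * (starRingEnd ℂ) (sphHarm n m ξ))

/-- The `p`-th order multipole expansion
`M_c^p[g](x) = Σ_{n=0}^p Σ_{m=-n}^n M_n^m I_n^m(x-c)` of `g` centered at `c`. -/
def mpoleExp (c : E3) (ρ : ℝ) (g : E3 → ℂ) (p : ℕ) (x : E3) : ℂ :=
  ∑ n ∈ Finset.range (p + 1), ∑ m ∈ Finset.Icc (-(n : ℤ)) (n : ℤ),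
    mpoleCoeff c ρ g n m * solidI n m (x - c)

/-- `f` is harmonic on a set `s` if it is twice continuously differentiable there and its
Laplacian (sum of pure second derivatives along the coordinate directions) vanishes. -/
def IsHarmonicOn (f : E3 → ℂ) (s : Set E3) : Prop :=
  ContDiffOn ℝ 2 f s ∧ ∀ x ∈ s,
    ∑ i : Fin 3,
      iteratedFDeriv ℝ 2 f x
        ![EuclideanSpace.single i (1 : ℝ), EuclideanSpace.single i (1 : ℝ)] = 0

/-- The point potential `φ_s(x) = 1/‖x - s‖` due to a unit-strength source at `s`. -/
def pointPot (s : E3) (x : E3) : ℂ := ((‖x - s‖⁻¹ : ℝ) : ℂ)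

/-- The supremum norm of `f` over a set `A`. -/
def supNormOn (f : E3 → ℂ) (A : Set E3) : ℝ := sSup ((fun x => ‖f x‖) '' A)

/-- The degree-`p` Fourier–Laplace projection
`F_p f = Σ_{n=0}^p Σ_{m=-n}^n ⟨f, Y_n^m⟩ Y_n^m` of a function on the unit sphere. -/
def fourierProj (p : ℕ) (f : E3 → ℂ) (ξ : E3) : ℂ :=
  ∑ n ∈ Finset.range (p + 1), ∑ m ∈ Finset.Icc (-(n : ℤ)) (n : ℤ),
    sphereIntegral (fun η => f η * (starRingEnd ℂ) (sphHarm n m η)) * sphHarm n m ξ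

/-- The Lebesgue constant `Λ_p`: the operator norm of the Fourier–Laplace projection
`F_p` on `C(S²)`, i.e. the least admissible constant in `‖F_p f‖_∞ ≤ Λ ‖f‖_∞`. -/
def lebesgueConst (p : ℕ) : ℝ :=
  sInf {Λ : ℝ | 0 ≤ Λ ∧ ∀ f : E3 → ℂ, ContinuousOn f S2 →
    ∀ ξ ∈ S2, ‖fourierProj p f ξ‖ ≤ Λ * supNormOn f S2}

/-- The `ν`-th term `S^R_{n,ν}(c,t)` of the local expansion of the regular solid
harmonic `R_n^0` about `c`, from the addition theorem for regular solid harmonics. -/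
def termSR (n ν : ℕ) (c t : E3) : ℂ :=
  ((normA n 0 : ℝ) : ℂ) *
    ∑ μ ∈ (Finset.Icc (-(ν : ℤ)) (ν : ℤ) ∩
        Finset.Icc (-((n - ν : ℕ) : ℤ)) ((n - ν : ℕ) : ℤ)),
      ((n.choose ((ν : ℤ) + μ).toNat : ℝ) : ℂ) *
        (solidR (n - ν) (-μ) c * solidR ν μ (t - c)) /
          (((normA (n - ν) (-μ) : ℝ) : ℂ) * ((normA ν μ : ℝ) : ℂ))

/-- The `ν`-th term `S^I_{n,ν}(c,t)` of the local expansion of the irregular solid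
harmonic `I_n^0` about `c`, from the addition theorem for irregular solid harmonics. -/
def termSI (n ν : ℕ) (c t : E3) : ℂ :=
  ((normA n 0 : ℝ) : ℂ) *
    ∑ μ ∈ Finset.Icc (-(ν : ℤ)) (ν : ℤ),
      (-1 : ℂ) ^ ((ν : ℤ) - μ) *
        (((((n : ℤ) + ν - μ).toNat.choose n : ℝ)) : ℂ) *
        (solidI (n + ν) μ c * solidR ν (-μ) (t - c)) /
          (((normA (n + ν) μ : ℝ) : ℂ) * ((normA ν (-μ) : ℝ) : ℂ))

/-! ### Legendre polynomials and their differential equations -/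

open Polynomial in
/-- The polynomial `(X² - 1)ⁿ` from Rodrigues' formula. -/
def rodPoly (n : ℕ) : ℝ[X] := (X ^ 2 - 1) ^ n

open Polynomial in
/-- The Legendre polynomial of degree `n` as an element of `ℝ[X]`. -/
def legPoly (n : ℕ) : ℝ[X] :=
  C (1 / ((2 : ℝ) ^ n * n.factorial)) * derivative^[n] (rodPoly n)

theorem iteratedDeriv_polyFun (p : Polynomial ℝ) (k : ℕ) :
    iteratedDeriv k (fun x => p.eval x) = fun x => (Polynomial.derivative^[k] p).eval x := by
  induction k generalizing p with
  | zero => simp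
  | succ k ih =>
    rw [iteratedDeriv_succ', Function.iterate_succ_apply, ← ih]
    congr 1
    ext x
    simp

theorem legendreP_eq (n : ℕ) : legendreP n = fun x => (legPoly n).eval x := by
  ext x
  have h : (fun t : ℝ => (t ^ 2 - 1) ^ n) = fun t => (rodPoly n).eval t := by
    ext t; simp [rodPoly]
  simp only [legendreP, h, iteratedDeriv_polyFun, legPoly, Polynomial.eval_mul,
    Polynomial.eval_C]

open Polynomial in
/-- The `(k+1)`-fold derivative of `(X² - 1) q' = 2nX q`, where `q = (X² - 1)ⁿ`. -/
theorem rodPoly_ode (n k : ℕ) :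
    (X ^ 2 - 1) * derivative^[k + 2] (rodPoly n)
      + 2 * ((k : ℝ[X]) + 1 - (n : ℝ[X])) * X * derivative^[k + 1] (rodPoly n)
      + ((k : ℝ[X]) + 1) * ((k : ℝ[X]) - 2 * (n : ℝ[X])) * derivative^[k] (rodPoly n) = 0 := by
  induction k with
  | zero =>
    have h : (X ^ 2 - 1) * derivative (rodPoly n) = 2 * (n : ℝ[X]) * X * rodPoly n := by
      cases n with
      | zero => simp [rodPoly]
      | succ n =>
        simp only [rodPoly, derivative_pow_succ]
        simp
        ring
    have h2 := congrArg derivative h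
    simp only [derivative_mul, derivative_sub, derivative_X_pow, derivative_X, derivative_one,
      derivative_natCast, derivative_ofNat] at h2
    simp [show (C 2 : ℝ[X]) = 2 from rfl] at h2 ⊢
    linear_combination h2
  | succ k ih =>
    have h2 := congrArg derivative ih
    simp only [derivative_mul, derivative_sub, derivative_add, derivative_X_pow, derivative_X,
      derivative_one, derivative_natCast, derivative_ofNat,
      ← Function.iterate_succ_apply' derivative, derivative_zero] at h2
    simp [show (C 2 : ℝ[X]) = 2 from rfl] at h2 ⊢
    linear_combination h2

open Polynomial in
/-- The associated Legendre equation, in the form satisfied by the `m`-th derivative of the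
Legendre polynomial. -/
theorem legPoly_ode (n m : ℕ) :
    (1 - X ^ 2) * derivative^[m + 2] (legPoly n)
      - 2 * ((m : ℝ[X]) + 1) * X * derivative^[m + 1] (legPoly n)
      + ((n : ℝ[X]) - (m : ℝ[X])) * ((n : ℝ[X]) + (m : ℝ[X]) + 1) * derivative^[m] (legPoly n) = 0 := by
  have h := rodPoly_ode n (m + n)
  simp only [legPoly, iterate_derivative_C_mul, ← Function.iterate_add_apply]
  rw [show m + 2 + n = m + n + 2 by ring, show m + 1 + n = m + n + 1 by ring]
  push_cast at h
  linear_combination (-C (1 / ((2 : ℝ) ^ n * n.factorial))) * h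

open Polynomial in
/-- `legPoly n` has degree at most `n`. -/
theorem legPoly_top (n : ℕ) : derivative^[n + 1] (legPoly n) = 0 := by
  simp only [legPoly, iterate_derivative_C_mul, ← Function.iterate_add_apply]
  rw [iterate_derivative_eq_zero, mul_zero]
  have : (rodPoly n).natDegree ≤ n * 2 := by
    unfold rodPoly
    refine natDegree_pow_le_of_le n ?_
    compute_degree
  omega

open Polynomial in
/-- In the variable `X - 1`, the polynomial `(X² - 1)ⁿ` is `Xⁿ (X + 2)ⁿ`, whose `n`-th
coefficient is `2ⁿ`. -/
theorem legPoly_eval_one (n : ℕ) : (legPoly n).eval 1 = 1 := by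
  have h : (hasseDeriv n (rodPoly n)).eval 1 = 2 ^ n := by
    rw [← taylor_coeff]
    have : taylor 1 (rodPoly n) = (X + C 2) ^ n * X ^ n := by
      simp only [rodPoly, taylor_pow, map_sub, taylor_X, taylor_one, ← mul_pow, C_1]
      congr 1
      rw [show (C 2 : ℝ[X]) = 2 from rfl]
      ring
    rw [this]
    simp [coeff_mul_X_pow', coeff_zero_eq_eval_zero]
  rw [legPoly, ← factorial_smul_hasseDeriv]
  simp [h]
  field_simp

/-! ### The polynomial form of the addition theorem -/

/-- The coefficient `(n-m)!/(n+m)!`, used for `m ≤ n` (the subtraction is truncated). -/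
def facRatio (n m : ℕ) : ℝ := ((n - m).factorial : ℝ) / ((n + m).factorial : ℝ)

theorem facRatio_succ (n m : ℕ) (h : m < n) :
    facRatio n (m + 1) * (((n : ℝ) - m) * (n + m + 1)) = facRatio n m := by
  obtain ⟨d, rfl⟩ := Nat.exists_eq_add_of_lt h
  unfold facRatio
  rw [show m + d + 1 - (m + 1) = d by omega, show m + d + 1 - m = d + 1 by omega,
    show m + d + 1 + (m + 1) = (m + d + 1 + m) + 1 by ring,
    Nat.factorial_succ (m + d + 1 + m), Nat.factorial_succ d]
  push_cast
  field_simp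
  ring

open Polynomial in
/-- The sum over all orders of the squared associated Legendre functions, weighted by
`(n-m)!/(n+m)!`, with the orders `±m` combined. -/
def legSum (n : ℕ) : ℝ[X] :=
  legPoly n ^ 2 + 2 * ∑ m ∈ Finset.range n,
    C (facRatio n (m + 1)) * ((1 - X ^ 2) ^ (m + 1) * derivative^[m + 1] (legPoly n) ^ 2)

open Polynomial in
/-- With `G m = (n-m)!/(n+m)! (1-X²)^m P⁽ᵐ⁾ P⁽ᵐ⁺¹⁾`, the derivative of the order-`m` term is
`G m - G (m-1)` by the associated Legendre equation, and the sum telescopes. -/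
theorem derivative_legSum (n : ℕ) : derivative (legSum n) = 0 := by
  set G : ℕ → ℝ[X] := fun m => C (facRatio n m) *
    ((1 - X ^ 2) ^ m * derivative^[m] (legPoly n) * derivative^[m + 1] (legPoly n)) with hG
  have key : ∀ m ∈ Finset.range n,
      derivative (C (facRatio n (m + 1)) *
        ((1 - X ^ 2) ^ (m + 1) * derivative^[m + 1] (legPoly n) ^ 2)) = G (m + 1) - G m := by
    intro m hm
    have hc : C (facRatio n (m + 1)) * (((n : ℝ[X]) - m) * (n + m + 1)) = C (facRatio n m) := by
      rw [← facRatio_succ n m (Finset.mem_range.1 hm)]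
      simp
    have ho := legPoly_ode n m
    simp only [hG, ← hc]
    rw [derivative_C_mul]
    simp only [derivative_mul, derivative_pow_succ, derivative_sub,
      derivative_X, derivative_one, ← Function.iterate_succ_apply' derivative]
    simp only [map_add, map_one, map_natCast, Nat.succ_eq_add_one]
    push_cast
    linear_combination (C (facRatio n (m + 1)) * (1 - X ^ 2) ^ m
      * derivative^[m + 1] (legPoly n)) * ho
  have hG0 : G 0 = legPoly n * derivative (legPoly n) := by
    simp [hG, facRatio, Nat.factorial_ne_zero]
  have hGn : G n = 0 := by simp [hG, legPoly_top, -Function.iterate_succ]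
  rw [legSum, derivative_add, ← C_ofNat, derivative_C_mul, derivative_sum,
    Finset.sum_congr rfl key, Finset.sum_range_sub, hG0, hGn, derivative_sq]
  ring

theorem legSum_eval (n : ℕ) (x : ℝ) : (legSum n).eval x = 1 := by
  have h := Polynomial.eq_C_of_derivative_eq_zero (derivative_legSum n)
  have h1 : (legSum n).eval 1 = 1 := by
    simp [legSum, legPoly_eval_one, Polynomial.eval_finsetSum]
  rw [h, Polynomial.eval_C] at h1 ⊢
  exact h1

/-! ### The addition theorem on the diagonal -/

open Polynomial in
theorem assocLegendreNat_sq (n m : ℕ) (x : ℝ) (hx : 0 ≤ 1 - x ^ 2) :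
    assocLegendreNat n m x ^ 2 = (1 - x ^ 2) ^ m * (derivative^[m] (legPoly n)).eval x ^ 2 := by
  have h : ((1 - x ^ 2) ^ ((m : ℝ) / 2)) ^ 2 = (1 - x ^ 2) ^ m := by
    rw [← Real.rpow_natCast, ← Real.rpow_mul hx]
    rw [Nat.cast_ofNat, div_mul_cancel₀ _ (two_ne_zero' ℝ), Real.rpow_natCast]
  rw [assocLegendreNat, legendreP_eq, iteratedDeriv_polyFun, mul_pow, mul_pow, h, ← pow_mul,
    mul_comm m 2, pow_mul]
  simp

theorem norm_sphHarm_sq (n : ℕ) (m : ℤ) (ξ : E3) :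
    ‖sphHarm n m ξ‖ ^ 2 = normA n m ^ 2 * assocLegendre n m (ξ 2) ^ 2 := by
  have he : ‖Complex.exp ((m : ℂ) *
      ((Complex.arg ((ξ 0 : ℂ) + (ξ 1 : ℂ) * Complex.I) : ℝ) : ℂ) * Complex.I)‖ = 1 := by
    have := Complex.norm_exp_ofReal_mul_I
      ((m : ℝ) * Complex.arg ((ξ 0 : ℂ) + (ξ 1 : ℂ) * Complex.I))
    push_cast at this
    exact this
  rw [sphHarm, norm_mul, norm_mul, he, mul_one, mul_pow]
  simp

theorem normA_sq (n : ℕ) (m : ℤ) : normA n m ^ 2 = (2 * n + 1) / (4 * π) *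
    ((((n : ℤ) - m).toNat.factorial : ℝ) / (((n : ℤ) + m).toNat.factorial : ℝ)) := by
  rw [normA, Real.sq_sqrt]
  positivity

theorem norm_sphHarm_pos (n m : ℕ) (ξ : E3) :
    ‖sphHarm n m ξ‖ ^ 2 =
      (2 * n + 1) / (4 * π) * (facRatio n m * assocLegendreNat n m (ξ 2) ^ 2) := by
  rw [norm_sphHarm_sq, normA_sq, assocLegendre, if_pos (by positivity), facRatio,
    show ((n : ℤ) - m).toNat = n - m by omega, show ((n : ℤ) + m).toNat = n + m by omega,
    Int.toNat_natCast]
  ring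

theorem norm_sphHarm_neg (n m : ℕ) (ξ : E3) :
    ‖sphHarm n (-(m : ℤ)) ξ‖ ^ 2 = ‖sphHarm n m ξ‖ ^ 2 := by
  rcases Nat.eq_zero_or_pos m with rfl | hm
  · simp
  rw [norm_sphHarm_pos, norm_sphHarm_sq, normA_sq, assocLegendre, if_neg (by omega), facRatio,
    show ((n : ℤ) - -(m : ℤ)).toNat = n + m by omega,
    show ((n : ℤ) + -(m : ℤ)).toNat = n - m by omega,
    show (- -(m : ℤ)).toNat = m by omega, mul_pow, mul_pow, ← pow_mul, mul_comm m 2, pow_mul]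
  have h1 : ((n - m).factorial : ℝ) ≠ 0 := by positivity
  have h2 : ((n + m).factorial : ℝ) ≠ 0 := by positivity
  field_simp
  simp

theorem sum_Icc_symm (n : ℕ) (f : ℤ → ℝ) :
    ∑ m ∈ Finset.Icc (-(n : ℤ)) n, f m =
      f 0 + ∑ m ∈ Finset.range n, (f ((m + 1 : ℕ) : ℤ) + f (-((m + 1 : ℕ) : ℤ))) := by
  induction n with
  | zero => simp
  | succ n ih =>
    have : Finset.Icc (-((n + 1 : ℕ) : ℤ)) ((n + 1 : ℕ) : ℤ) =
        insert ((n + 1 : ℕ) : ℤ) (insert (-((n + 1 : ℕ) : ℤ)) (Finset.Icc (-(n : ℤ)) n)) := by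
      ext z
      simp only [Finset.mem_insert, Finset.mem_Icc]
      omega
    rw [this, Finset.sum_insert (by simp; omega), Finset.sum_insert (by simp), ih,
      Finset.sum_range_succ]
    ring

theorem sum_norm_sphHarm_sq (n : ℕ) (ξ : E3) (hξ : ξ ∈ S2) :
    ∑ m ∈ Finset.Icc (-(n : ℤ)) (n : ℤ), ‖sphHarm n m ξ‖ ^ 2 = (2 * n + 1) / (4 * π) := by
  have hx : 0 ≤ 1 - ξ 2 ^ 2 := by
    have h : ‖ξ‖ = 1 := by simpa [S2] using hξ
    have h2 := EuclideanSpace.real_norm_sq_eq ξ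
    rw [h, Fin.sum_univ_three] at h2
    nlinarith [sq_nonneg (ξ 0), sq_nonneg (ξ 1)]
  have h0 := norm_sphHarm_pos n 0 ξ
  rw [Nat.cast_zero] at h0
  have hs := legSum_eval n (ξ 2)
  simp only [legSum, Polynomial.eval_add, Polynomial.eval_mul, Polynomial.eval_finsetSum,
    Polynomial.eval_pow, Polynomial.eval_sub, Polynomial.eval_one, Polynomial.eval_X,
    Polynomial.eval_C, Polynomial.eval_ofNat] at hs
  have hf : facRatio n 0 = 1 := by simp [facRatio, Nat.factorial_ne_zero]
  rw [sum_Icc_symm, h0]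
  simp only [norm_sphHarm_neg, norm_sphHarm_pos, assocLegendreNat_sq _ _ _ hx, hf,
    ← two_mul]
  simp only [mul_left_comm (2 : ℝ) ((2 * (n : ℝ) + 1) / (4 * π)), ← Finset.mul_sum]
  rw [← mul_add]
  simp only [pow_zero, one_mul, Function.iterate_zero, id]
  rw [hs, mul_one]

/-! ### The binomial weights -/

/-- Log-concavity of `j ↦ C(j, k)`. -/
theorem choose_mul_step (a b k : ℕ) (h : b ≤ a) :
    (a + 1).choose k * b.choose k ≤ a.choose k * (b + 1).choose k := by
  cases k with
  | zero => simp
  | succ k =>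
    -- By Pascal's rule this is `C(a,k) C(b,k+1) ≤ C(a,k+1) C(b,k)`.
    rw [Nat.choose_succ_succ', Nat.choose_succ_succ' b]
    have hm : a.choose k * b.choose (k + 1) ≤ a.choose (k + 1) * b.choose k := by
      refine Nat.le_of_mul_le_mul_right ?_ (Nat.succ_pos k)
      calc a.choose k * b.choose (k + 1) * (k + 1)
          = a.choose k * b.choose k * (b - k) := by
            rw [mul_assoc, Nat.choose_succ_right_eq, mul_assoc]
        _ ≤ a.choose k * b.choose k * (a - k) := by gcongr
        _ = a.choose (k + 1) * b.choose k * (k + 1) := by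
            rw [mul_right_comm, mul_right_comm (a.choose (k + 1)), Nat.choose_succ_right_eq]
    simp only [add_mul, mul_add]
    omega

theorem choose_mul_le (N k j : ℕ) (h : j ≤ N) :
    (N + j).choose k * (N - j).choose k ≤ N.choose k ^ 2 := by
  induction j with
  | zero => simp [sq]
  | succ j ih =>
    refine le_trans ?_ (ih (by omega))
    have := choose_mul_step (N + j) (N - (j + 1)) k (by omega)
    rwa [show N - (j + 1) + 1 = N - j by omega] at this

theorem choose_mul_le_int (N k : ℕ) (l : ℤ) (h1 : -(N : ℤ) ≤ l) (h2 : l ≤ N) :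
    ((N : ℤ) + l).toNat.choose k * ((N : ℤ) - l).toNat.choose k ≤ N.choose k ^ 2 := by
  rcases le_total 0 l with h | h
  · convert choose_mul_le N k l.toNat (by omega) using 3 <;> omega
  · rw [mul_comm]
    convert choose_mul_le N k (-l).toNat (by omega) using 3 <;> omega

/-- For `0 ≤ ν' ≤ ν` and `ξ ∈ S²`,
`Σ_{λ=−ν'}^{ν'} C(ν+λ, ν−ν') C(ν−λ, ν−ν') |Y_{ν'}^λ(ξ)|² ≤ C(ν,ν')² (2ν'+1)/(4π)`. -/
theorem statement17 (ν ν' : ℕ) (hν : ν' ≤ ν) (ξ : E3) (hξ : ξ ∈ S2) :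
    ∑ lam ∈ Finset.Icc (-(ν' : ℤ)) (ν' : ℤ),
      ((((ν : ℤ) + lam).toNat.choose (ν - ν') : ℝ)) *
        ((((ν : ℤ) - lam).toNat.choose (ν - ν') : ℝ)) * ‖sphHarm ν' lam ξ‖ ^ 2 ≤
      (ν.choose ν' : ℝ) ^ 2 * (2 * ν' + 1) / (4 * π) := by
  have hc : ∀ lam ∈ Finset.Icc (-(ν' : ℤ)) (ν' : ℤ),
      ((((ν : ℤ) + lam).toNat.choose (ν - ν') : ℝ)) *
        ((((ν : ℤ) - lam).toNat.choose (ν - ν') : ℝ)) * ‖sphHarm ν' lam ξ‖ ^ 2 ≤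
      (ν.choose ν' : ℝ) ^ 2 * ‖sphHarm ν' lam ξ‖ ^ 2 := by
    intro lam hl
    rw [Finset.mem_Icc] at hl
    have h := choose_mul_le_int ν (ν - ν') lam (by omega) (by omega)
    rw [Nat.choose_symm hν] at h
    gcongr
    exact_mod_cast h
  refine (Finset.sum_le_sum hc).trans_eq ?_
  rw [← Finset.mul_sum, sum_norm_sphHarm_sq ν' ξ hξ, mul_div_assoc]

end Paper
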